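/- The Ramsey–Turán density satisfies ρ_6(14) ≤ 12/23; equivalently, for every δ > 0 there exist ε > 0 and n_0 such that every K_{14}-free graph G on n ≥ n_0 vertices with α_6(G) ≤ ε·n has at most (12/23 + δ)·C(n,2) edges. -/

import Mathlib

/-!
Apply the regularity lemma and give each regular pair of clusters the integer weight
`w ∈ {0, …, 6}` obtained by rounding up six times its density (`weight`). In a cluster one finds, by
`α₆(G) = o(n)`, a 6-clique of typical vertices; towards a neighbouring cluster at weight `w`, double
counting yields `w` of these six vertices with a linear-sized common neighbourhood there
(`exists_common_nbhd`). Embedding clusters one after another (`Emb.insert`) gives two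
families of cliques on a set `J` of clusters with pairwise positive weights: cliques on
`6 + w i j + (|J| - 2)` vertices (`emb_pair`) and on `w i j + w i k + w j k + (|J| - 3)` vertices
(`emb_triple`). As `G` is `K₁₄`-free, `|J| + w i j ≤ 9` and `|J| + w i j + w i k + w j k ≤ 16`.

The number of edges is, up to `o(n²)`, a twelfth of the form `∑ w i j x i x j` at the cluster
sizes, and `quad_le` shows that the form is at most `(72 / 23) (∑ x i)²`. By Zykov symmetrisation
(`quad_le_of_cliques`) one may assume all weights positive, and then there are few cases: the
maximum is attained on three clusters with weights `6, 6, 1` (`three_form`), and four (`quad_four`),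
five (`quad_five`) or more clusters give less. Dividing `72 / 23` by six gives the density
`12 / 23`.
-/

open Finset
open scoped Classical

/-- `α_p(G)`: the largest size of a vertex subset inducing a `K_p`-free subgraph. -/
noncomputable def alphaP {V : Type} [Fintype V] (p : ℕ) (G : SimpleGraph V) : ℕ :=
  sSup {k : ℕ | ∃ s : Finset V, s.card = k ∧ ∀ t : Finset V, t ⊆ s → ¬ G.IsNClique p t}

/-- The number of edges of `G`. -/
noncomputable def edgeCount {V : Type} [Fintype V] (G : SimpleGraph V) : ℕ :=
  G.edgeSet.ncard

/-! ### The weighted optimisation problem -/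

/-- Only the smallest of the three products matters: raising the other two weights to `6`
leaves weight `1` on the smallest one. The extremal point is `(a, b, c) = (6, 6, 1)` with
`x : y : z = 11 : 6 : 6`. -/
theorem three_form {a b c x y z : ℝ} (ha : a ≤ 6) (hb : b ≤ 6) (hc : c ≤ 6) (h : a + b + c ≤ 13)
    (hx : 0 ≤ x) (hy : 0 ≤ y) (hz : 0 ≤ z) :
    2 * (a * (x * y) + b * (x * z) + c * (y * z)) ≤ 72 / 23 * (x + y + z) ^ 2 := by
  have key : ∀ {a b c x y z : ℝ}, a ≤ 6 → b ≤ 6 → a + b + c ≤ 13 → 0 ≤ y * z →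
      y * z ≤ x * y → y * z ≤ x * z →
      2 * (a * (x * y) + b * (x * z) + c * (y * z)) ≤ 72 / 23 * (x + y + z) ^ 2 := by
    intro a b c x y z ha hb h h0 h1 h2
    nlinarith [mul_le_mul_of_nonneg_left h1 (sub_nonneg.2 ha),
      mul_le_mul_of_nonneg_left h2 (sub_nonneg.2 hb), mul_le_mul_of_nonneg_right h h0,
      sq_nonneg (y - z), sq_nonneg (12 * x - 11 * y - 11 * z)]
  have pxy := mul_nonneg hx hy
  have pxz := mul_nonneg hx hz
  have pyz := mul_nonneg hy hz
  rcases le_total (x * y) (x * z) with h1 | h1 <;> rcases le_total (x * y) (y * z) with h2 | h2 <;>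
    rcases le_total (x * z) (y * z) with h3 | h3
  all_goals first
    | linarith [key (x := x) (y := y) (z := z) ha hb h pyz (by linarith) (by linarith)]
    | linarith [key (a := a) (b := c) (c := b) (x := y) (y := x) (z := z) ha hc (by linarith) pxz
        (by linarith) (by linarith)]
    | linarith [key (a := b) (b := c) (c := a) (x := z) (y := x) (z := y) hb hc (by linarith) pxy
        (by linarith) (by linarith)]

/-- Linear-programming duality for a form on four ordered variables whose pair weights are at
most `u` and whose triangle weights are at most `T`. The first bound is attained by a four-cycle
of weight `u` with both diagonals `T - 2 * u`, the second by a star of weight `u` with the remaining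
triangle of weight `T - 2 * u`. The dual multipliers are the nonnegative products in the
proof; which of the two bounds is feasible depends on the sign of `x1 - x2 - x3`. -/
theorem four_form {u T w12 w13 w14 w23 w24 w34 x1 x2 x3 x4 : ℝ}
    (h12 : w12 ≤ u) (h13 : w13 ≤ u) (h14 : w14 ≤ u)
    (t1 : w23 + w24 + w34 ≤ T) (t2 : w13 + w14 + w34 ≤ T)
    (t3 : w12 + w14 + w24 ≤ T) (t4 : w12 + w13 + w23 ≤ T)
    (o4 : 0 ≤ x4) (o3 : x4 ≤ x3) (o2 : x3 ≤ x2) (o1 : x2 ≤ x1) :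
    w12 * (x1 * x2) + w13 * (x1 * x3) + w14 * (x1 * x4) + w23 * (x2 * x3) + w24 * (x2 * x4)
        + w34 * (x3 * x4) ≤
      u * ((x1 + x4) * (x2 + x3)) + (T - 2 * u) * (x1 * x4 + x2 * x3) ∨
    w12 * (x1 * x2) + w13 * (x1 * x3) + w14 * (x1 * x4) + w23 * (x2 * x3) + w24 * (x2 * x4)
        + w34 * (x3 * x4) ≤
      u * (x1 * (x2 + x3 + x4)) + (T - 2 * u) * (x2 * x3 + x2 * x4 + x3 * x4) := by
  have o3' : 0 ≤ x3 := o4.trans o3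
  have o2' : 0 ≤ x2 := o3'.trans o2
  rcases le_total x1 (x2 + x3) with h | h
  · left
    have y1 : 0 ≤ x4 * (x2 + x3 - x1) / 2 := by
      have := mul_nonneg o4 (sub_nonneg.2 h); linarith
    have y2 : 0 ≤ x4 * (x3 + x1 - x2) / 2 := by
      have := mul_nonneg o4 (show 0 ≤ x3 + x1 - x2 by linarith); linarith
    have y3 : 0 ≤ x4 * (x1 + x2 - x3) / 2 := by
      have := mul_nonneg o4 (show 0 ≤ x1 + x2 - x3 by linarith); linarith
    have y4 : 0 ≤ x2 * x3 - x4 * (x2 + x3 - x1) / 2 := by nlinarith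
    have z12 : 0 ≤ (x1 - x3) * (x2 - x4) := mul_nonneg (by linarith) (by linarith)
    have z13 : 0 ≤ (x1 - x2) * (x3 - x4) := mul_nonneg (by linarith) (by linarith)
    linarith [mul_le_mul_of_nonneg_right t1 y1, mul_le_mul_of_nonneg_right t2 y2,
      mul_le_mul_of_nonneg_right t3 y3, mul_le_mul_of_nonneg_right t4 y4,
      mul_le_mul_of_nonneg_right h12 z12, mul_le_mul_of_nonneg_right h13 z13]
  · right
    have z12 : 0 ≤ x2 * (x1 - x3 - x4) := mul_nonneg o2' (by linarith)
    have z13 : 0 ≤ x3 * (x1 - x2 - x4) := mul_nonneg o3' (by linarith)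
    have z14 : 0 ≤ x4 * (x1 - x2 - x3) := mul_nonneg o4 (by linarith)
    linarith [mul_le_mul_of_nonneg_right t2 (mul_nonneg o3' o4),
      mul_le_mul_of_nonneg_right t3 (mul_nonneg o2' o4),
      mul_le_mul_of_nonneg_right t4 (mul_nonneg o2' o3'),
      mul_le_mul_of_nonneg_right h12 z12, mul_le_mul_of_nonneg_right h13 z13,
      mul_le_mul_of_nonneg_right h14 z14]

/-- The quadratic form of the weighted graph `w` on `s`, evaluated at `x`. The sum runs over
ordered pairs, so an edge counts twice. -/
noncomputable def quad {ι : Type} (w : ι → ι → ℕ) (x : ι → ℝ) (s : Finset ι) : ℝ :=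
  ∑ i ∈ s, ∑ j ∈ s, (w i j : ℝ) * (x i * x j)

section
variable {ι : Type} {w : ι → ι → ℕ}

theorem quad_insert (hs : ∀ i j, w i j = w j i) (hd : ∀ i, w i i = 0) (x : ι → ℝ)
    {s : Finset ι} {a : ι} (ha : a ∉ s) :
    quad w x (insert a s) = quad w x s + 2 * x a * ∑ j ∈ s, (w a j : ℝ) * x j := by
  unfold quad
  rw [sum_insert ha, sum_insert ha]
  simp_rw [sum_insert ha, sum_add_distrib]
  have : ∑ i ∈ s, (w i a : ℝ) * (x i * x a) = ∑ i ∈ s, (w a i : ℝ) * (x a * x i) :=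
    sum_congr rfl fun i _ => by rw [hs i a]; ring
  rw [this, hd, mul_sum]
  have : ∑ i ∈ s, (w a i : ℝ) * (x a * x i) = ∑ i ∈ s, x a * ((w a i : ℝ) * x i) :=
    sum_congr rfl fun i _ => by ring
  simp_rw [mul_assoc, ← mul_sum] at *
  rw [this]
  simp
  ring

/-- Zykov symmetrisation: if `w i j = 0` then `quad` is linear along moves shifting mass
between `x i` and `x j`, so one of the two can be emptied without decreasing the form. Hence it
suffices to bound the form on sets whose pairs all have positive weight. -/
theorem quad_le_of_cliques (hs : ∀ i j, w i j = w j i) (hd : ∀ i, w i i = 0) (C : ℝ)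
    (s : Finset ι) (x : ι → ℝ) (hx : ∀ i, 0 ≤ x i)
    (H : ∀ J ⊆ s, (∀ i ∈ J, ∀ j ∈ J, i ≠ j → 1 ≤ w i j) → ∀ y : ι → ℝ, (∀ i, 0 ≤ y i) →
      quad w y J ≤ C * (∑ i ∈ J, y i) ^ 2) :
    quad w x s ≤ C * (∑ i ∈ s, x i) ^ 2 := by
  induction s using Finset.strongInduction generalizing x with
  | H s ih =>
  by_cases hc : ∀ i ∈ s, ∀ j ∈ s, i ≠ j → 1 ≤ w i j
  · exact H s subset_rfl hc x hx
  push Not at hc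
  obtain ⟨i, hi, j, hj, hij, h0⟩ := hc
  have h0 : w i j = 0 := by omega
  have main : ∀ i j, i ∈ s → j ∈ s → i ≠ j → w i j = 0 →
      ∑ k ∈ s, (w j k : ℝ) * x k ≤ ∑ k ∈ s, (w i k : ℝ) * x k →
      quad w x s ≤ C * (∑ i ∈ s, x i) ^ 2 := by
    intro i j hi hj hij h0 hle
    have hni : i ∉ (s.erase j).erase i := by simp
    have hnj : j ∉ insert i ((s.erase j).erase i) := by simp [hij.symm]
    have e1 : insert i ((s.erase j).erase i) = s.erase j :=
      insert_erase (mem_erase.2 ⟨hij, hi⟩)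
    have e2 : insert j (insert i ((s.erase j).erase i)) = s := by
      rw [e1, insert_erase hj]
    set r := (s.erase j).erase i with hr
    have hy : ∀ k, 0 ≤ Function.update x i (x i + x j) k := by
      intro k
      by_cases hk : k = i
      · subst hk; simpa using add_nonneg (hx k) (hx j)
      · simpa [hk] using hx k
    have key := ih (s.erase j) (erase_ssubset hj) _ hy
      (fun J hJ => H J (hJ.trans (erase_subset _ _)))
    have hrk : ∀ k ∈ r, Function.update x i (x i + x j) k = x k := by
      intro k hk
      have : k ≠ i := fun h => hni (h ▸ hk)
      simp [this]
    have hq : quad w (Function.update x i (x i + x j)) r = quad w x r :=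
      sum_congr rfl fun a ha => sum_congr rfl fun b hb => by rw [hrk a ha, hrk b hb]
    have hsum : ∑ k ∈ r, Function.update x i (x i + x j) k = ∑ k ∈ r, x k :=
      sum_congr rfl hrk
    have hsw : ∑ k ∈ r, (w i k : ℝ) * Function.update x i (x i + x j) k
        = ∑ k ∈ r, (w i k : ℝ) * x k := sum_congr rfl fun k hk => by rw [hrk k hk]
    rw [← e1, quad_insert hs hd _ hni, sum_insert hni, hq, hsum, hsw] at key
    simp only [Function.update_self] at key
    rw [← e2, sum_insert hnj, sum_insert hni, sum_insert hnj, sum_insert hni] at hle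
    rw [← e2, quad_insert hs hd _ hnj, quad_insert hs hd _ hni, sum_insert hnj, sum_insert hni,
      sum_insert hni]
    have h0' : w j i = 0 := by rw [hs, h0]
    simp only [h0, h0', hd, Nat.cast_zero, zero_mul, zero_add] at hle key ⊢
    have := mul_le_mul_of_nonneg_left hle (hx j)
    have e3 : x j + (x i + ∑ k ∈ r, x k) = x i + x j + ∑ k ∈ r, x k := by ring
    rw [e3]
    linarith
  rcases le_total (∑ k ∈ s, (w j k : ℝ) * x k) (∑ k ∈ s, (w i k : ℝ) * x k) with h | h
  · exact main i j hi hj hij h0 h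
  · exact main j i hj hi hij.symm (by rw [hs, h0]) h

theorem quad_le_max (hd : ∀ i, w i i = 0) (u : ℕ) (s : Finset ι) (x : ι → ℝ) (hx : ∀ i, 0 ≤ x i)
    (hw : ∀ i ∈ s, ∀ j ∈ s, w i j ≤ u) :
    quad w x s ≤ u * ((∑ i ∈ s, x i) ^ 2 - ∑ i ∈ s, x i ^ 2) := by
  have : ∀ i ∈ s, ∑ j ∈ s, (w i j : ℝ) * (x i * x j) ≤ u * (x i * ∑ j ∈ s, x j) - u * x i ^ 2 := by
    intro i hi
    rw [← add_sum_erase s _ hi, ← add_sum_erase s x hi]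
    have : ∑ j ∈ s.erase i, (w i j : ℝ) * (x i * x j) ≤ ∑ j ∈ s.erase i, (u : ℝ) * (x i * x j) :=
      sum_le_sum fun j hj => mul_le_mul_of_nonneg_right
        (by exact_mod_cast hw i hi j (mem_of_mem_erase hj)) (mul_nonneg (hx i) (hx j))
    rw [← mul_sum, ← mul_sum] at this
    rw [hd]
    push_cast
    linarith
  refine (sum_le_sum this).trans (le_of_eq ?_)
  rw [sum_sub_distrib, ← mul_sum, ← mul_sum, ← sum_mul]
  ring

/-- Peels off an element of maximal `x`-value; iterated, it sorts a finite set. -/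
theorem exists_max_split (x : ι → ℝ) {s : Finset ι} {n : ℕ} (h : s.card = n + 1) :
    ∃ a t, a ∉ t ∧ s = insert a t ∧ t.card = n ∧ ∀ b ∈ t, x b ≤ x a := by
  obtain ⟨a, ha, hm⟩ := exists_max_image s x (card_pos.1 (by omega))
  exact ⟨a, s.erase a, by simp, (insert_erase ha).symm, by rw [card_erase_of_mem ha, h]; simp,
    fun b hb => hm b (mem_of_mem_erase hb)⟩

/-- Four clusters, for the two pairs `(u, T)` of pair and triangle bounds that arise from
positive cliques on four and on five clusters. -/
theorem quad_four (hs : ∀ i j, w i j = w j i) (hd : ∀ i, w i i = 0) {u T : ℕ} {C : ℝ}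
    (hC : (u = 5 ∧ T = 12 ∧ C = 3) ∨ (u = 4 ∧ T = 11 ∧ C = 11 / 4))
    {s : Finset ι} (h4 : s.card = 4) (x : ι → ℝ) (hx : ∀ i, 0 ≤ x i)
    (hw : ∀ i ∈ s, ∀ j ∈ s, i ≠ j → w i j ≤ u)
    (ht : ∀ i ∈ s, ∀ j ∈ s, ∀ k ∈ s, i ≠ j → i ≠ k → j ≠ k → w i j + w i k + w j k ≤ T) :
    quad w x s ≤ C * (∑ i ∈ s, x i) ^ 2 := by
  obtain ⟨a, s1, ha, rfl, h3, ma⟩ := exists_max_split x h4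
  obtain ⟨b, s2, hb, rfl, h2, mb⟩ := exists_max_split x h3
  obtain ⟨c, s3, hc, rfl, h1, mc⟩ := exists_max_split x h2
  obtain ⟨d, rfl⟩ := card_eq_one.1 h1
  have := four_form (u := u) (T := T) (x1 := x a) (x2 := x b) (x3 := x c) (x4 := x d)
    (w12 := w a b) (w13 := w a c) (w14 := w a d) (w23 := w b c) (w24 := w b d) (w34 := w c d)
    (by exact_mod_cast hw a (by simp) b (by simp) (by grind))
    (by exact_mod_cast hw a (by simp) c (by simp) (by grind))
    (by exact_mod_cast hw a (by simp) d (by simp) (by grind))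
    (by exact_mod_cast ht b (by simp) c (by simp) d (by simp) (by grind) (by grind) (by grind))
    (by exact_mod_cast ht a (by simp) c (by simp) d (by simp) (by grind) (by grind) (by grind))
    (by exact_mod_cast ht a (by simp) b (by simp) d (by simp) (by grind) (by grind) (by grind))
    (by exact_mod_cast ht a (by simp) b (by simp) c (by simp) (by grind) (by grind) (by grind))
    (hx d) (mc d (by simp)) (mb c (by simp)) (ma b (by simp))
  rw [quad_insert hs hd _ ha, quad_insert hs hd _ hb, quad_insert hs hd _ hc, sum_insert ha,
    sum_insert hb, sum_insert hc, sum_insert hb, sum_insert hc, sum_insert hc]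
  simp only [quad, sum_singleton, hd, Nat.cast_zero, zero_mul]
  rcases hC with ⟨rfl, rfl, rfl⟩ | ⟨rfl, rfl, rfl⟩
  · push_cast at this
    rcases this with h | h
    · nlinarith [sq_nonneg (x a + x d - x b - x c), sq_nonneg (x a - x d), sq_nonneg (x b - x c)]
    · nlinarith [sq_nonneg (x b - x c), sq_nonneg (x b - x d), sq_nonneg (x c - x d),
        sq_nonneg (15 * x a - 11 * (x b + x c + x d)), sq_nonneg (x b + x c + x d)]
  · push_cast at this
    rcases this with h | h
    · nlinarith [sq_nonneg (x a + x d - x b - x c), sq_nonneg (x a - x d), sq_nonneg (x b - x c)]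
    · nlinarith [sq_nonneg (x b - x c), sq_nonneg (x b - x d), sq_nonneg (x c - x d),
        sq_nonneg (2 * x a - (x b + x c + x d)), sq_nonneg (x b + x c + x d)]

/-- Five clusters. Averaging the bound `11 / 4` over the five four-element subsets loses a
diagonal term `∑ x i ^ 2`, which `quad_le_max` with maximal weight `4` compensates. -/
theorem quad_five (hs : ∀ i j, w i j = w j i) (hd : ∀ i, w i i = 0)
    {s : Finset ι} (h5 : s.card = 5) (x : ι → ℝ) (hx : ∀ i, 0 ≤ x i)
    (hw : ∀ i ∈ s, ∀ j ∈ s, i ≠ j → w i j ≤ 4)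
    (ht : ∀ i ∈ s, ∀ j ∈ s, ∀ k ∈ s, i ≠ j → i ≠ k → j ≠ k → w i j + w i k + w j k ≤ 11) :
    quad w x s ≤ 72 / 23 * (∑ i ∈ s, x i) ^ 2 := by
  have h1 := quad_le_max hd 4 s x hx (fun i hi j hj => by
    by_cases h : i = j
    · subst h; simp [hd]
    · exact hw i hi j hj h)
  have h2 : ∀ i ∈ s, quad w x s - 2 * (x i * ∑ j ∈ s, (w i j : ℝ) * x j) ≤
      11 / 4 * ((∑ j ∈ s, x j) ^ 2 - 2 * (x i * ∑ j ∈ s, x j) + x i ^ 2) := by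
    intro i hi
    have hni : i ∉ s.erase i := by simp
    have h4 := quad_four hs hd (Or.inr ⟨rfl, rfl, rfl⟩)
      (show (s.erase i).card = 4 by rw [card_erase_of_mem hi, h5]) x hx
      (fun a ha b hb => hw a (mem_of_mem_erase ha) b (mem_of_mem_erase hb))
      (fun a ha b hb c hc => ht a (mem_of_mem_erase ha) b (mem_of_mem_erase hb) c
        (mem_of_mem_erase hc))
    conv_lhs => rw [← insert_erase hi]
    rw [quad_insert hs hd x hni, sum_insert hni, hd, ← add_sum_erase s x hi]
    push_cast
    linarith
  have h3 := sum_le_sum h2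
  rw [sum_sub_distrib, ← mul_sum, ← mul_sum, sum_add_distrib, sum_sub_distrib, ← mul_sum, ← sum_mul,
    sum_const, sum_const, h5] at h3
  have e : ∑ i ∈ s, x i * ∑ j ∈ s, (w i j : ℝ) * x j = quad w x s :=
    sum_congr rfl fun i _ => by rw [mul_sum]; exact sum_congr rfl fun j _ => by ring
  rw [e] at h3
  simp only [nsmul_eq_mul] at h3
  push_cast at h1 h3
  nlinarith [sq_nonneg (∑ i ∈ s, x i)]

/-- The weighted optimisation problem. The hypotheses on the positive cliques `J` say that no
pair or triple inside `J` has enough weight to produce a 14-clique. -/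
theorem quad_le (hs : ∀ i j, w i j = w j i) (hd : ∀ i, w i i = 0) (h6 : ∀ i j, w i j ≤ 6)
    (s : Finset ι) (x : ι → ℝ) (hx : ∀ i, 0 ≤ x i)
    (hP : ∀ J ⊆ s, (∀ i ∈ J, ∀ j ∈ J, i ≠ j → 1 ≤ w i j) → J.card ≤ 6 →
      ∀ i ∈ J, ∀ j ∈ J, i ≠ j → J.card + w i j ≤ 9)
    (hT : ∀ J ⊆ s, (∀ i ∈ J, ∀ j ∈ J, i ≠ j → 1 ≤ w i j) → J.card ≤ 5 →
      ∀ i ∈ J, ∀ j ∈ J, ∀ k ∈ J, i ≠ j → i ≠ k → j ≠ k →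
        J.card + (w i j + w i k + w j k) ≤ 16) :
    quad w x s ≤ 72 / 23 * (∑ i ∈ s, x i) ^ 2 := by
  refine quad_le_of_cliques hs hd _ s x hx fun J hJ hc y hy => ?_
  have hsq := sq_nonneg (∑ i ∈ J, y i)
  rcases Nat.lt_or_ge J.card 6 with h | h
  · interval_cases hcard : J.card
    · rw [card_eq_zero] at hcard
      subst hcard; simp [quad]
    · obtain ⟨a, rfl⟩ := card_eq_one.1 hcard
      simp only [quad, sum_singleton, hd] at *
      push_cast; linarith
    · obtain ⟨a, b, hab, rfl⟩ := card_eq_two.1 hcard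
      rw [quad_insert hs hd _ (by simpa using hab), sum_pair hab]
      simp only [quad, sum_singleton, hd]
      have : (w a b : ℝ) ≤ 6 := by exact_mod_cast h6 a b
      push_cast
      nlinarith [mul_le_mul_of_nonneg_right this (mul_nonneg (hy a) (hy b)), sq_nonneg (y a - y b),
        sq_nonneg (y a + y b)]
    · obtain ⟨a, b, c, hab, hac, hbc, rfl⟩ := card_eq_three.1 hcard
      have ht := hT _ hJ hc (by omega) a (by simp) b (by simp) c (by simp) hab hac hbc
      have := three_form (a := w a b) (b := w a c) (c := w b c) (by exact_mod_cast h6 a b)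
        (by exact_mod_cast h6 a c) (by exact_mod_cast h6 b c)
        (by rw [hcard] at ht; exact_mod_cast (show w a b + w a c + w b c ≤ 13 by omega))
        (hy a) (hy b) (hy c)
      have ha : a ∉ ({b, c} : Finset ι) := by simp [hab, hac]
      have hb : b ∉ ({c} : Finset ι) := by simp [hbc]
      rw [quad_insert hs hd _ ha, quad_insert hs hd _ hb, sum_insert ha, sum_insert hb,
        sum_insert hb]
      simp only [quad, sum_singleton, hd, Nat.cast_zero, zero_mul]
      rw [← add_assoc]
      linarith
    · have := quad_four hs hd (Or.inl ⟨rfl, rfl, rfl⟩) hcard y hy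
        (fun i hi j hj hij => by have := hP J hJ hc (by omega) i hi j hj hij; omega)
        (fun i hi j hj k hk h1 h2 h3 => by
          have := hT J hJ hc (by omega) i hi j hj k hk h1 h2 h3; omega)
      linarith
    · exact quad_five hs hd hcard y hy
        (fun i hi j hj hij => by have := hP J hJ hc (by omega) i hi j hj hij; omega)
        (fun i hi j hj k hk h1 h2 h3 => by
          have := hT J hJ hc (by omega) i hi j hj k hk h1 h2 h3; omega)
  -- With at least six clusters, each pair lies in a six-element subset, capping its weight at `3`.
  · have h3 : ∀ i ∈ J, ∀ j ∈ J, w i j ≤ 3 := by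
      intro i hi j hj
      by_cases hij : i = j
      · subst hij; simp [hd]
      obtain ⟨K, h1, h2, h3⟩ := exists_subsuperset_card_eq (s := {i, j}) (t := J) (n := 6)
        (by intro k; simp; rintro (rfl | rfl) <;> assumption) (by rw [card_pair hij]; omega) h
      have := hP K (h2.trans hJ) (fun a ha b hb => hc a (h2 ha) b (h2 hb)) (by omega) i
        (h1 (by simp)) j (h1 (by simp)) hij
      omega
    have := quad_le_max hd 3 J y hy h3
    have h0 : 0 ≤ ∑ i ∈ J, y i ^ 2 := sum_nonneg fun i _ => sq_nonneg _
    push_cast at this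
    linarith
end

/-! ### Embedding cliques into clusters -/

section
variable {V ι : Type}

/-- Between any subsets of `X` and `Y` of size at least `m` the density exceeds `(w - 1) / 6` by at
least `η`. Unlike regularity, this passes to arbitrary subsets of `X` and `Y` with the same `m`. -/
def LowerDense (G : SimpleGraph V) (m η : ℝ) (w : ℕ) (X Y : Finset V) : Prop :=
  ∀ U ⊆ X, ∀ U' ⊆ Y, m ≤ #U → m ≤ #U' →
    (((w : ℝ) - 1) / 6 + η) * (#U * #U') ≤ #(G.interedges U U')

theorem LowerDense.mono {G : SimpleGraph V} {m η : ℝ} {w : ℕ} {X Y X' Y' : Finset V}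
    (h : LowerDense G m η w X Y) (hX : X' ⊆ X) (hY : Y' ⊆ Y) : LowerDense G m η w X' Y' :=
  fun U hU U' hU' => h U (hU.trans hX) U' (hU'.trans hY)

theorem card_interedges_eq_sum (G : SimpleGraph V) (U U' : Finset V) :
    #(G.interedges U U') = ∑ v ∈ U, #{y ∈ U' | G.Adj v y} := by
  rw [SimpleGraph.interedges_def, ← card_sigma]
  refine card_bij (fun e _ => ⟨e.1, e.2⟩) ?_ ?_ ?_
  · simp only [mem_filter, mem_product, mem_sigma]; tauto
  · rintro ⟨a, b⟩ _ ⟨c, d⟩ _ h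
    simpa using h
  · rintro ⟨a, b⟩ h
    simp only [mem_filter, mem_sigma] at h
    exact ⟨(a, b), by simp [h], rfl⟩

/-- At most `m` vertices of `X` have too few neighbours in any given `Y j`, so a 6-clique
can be found among the vertices that are typical towards all the `Y j`. -/
theorem exists_typical_clique {G : SimpleGraph V} {m η : ℝ} (hm : 0 < m)
    (hα : ∀ s : Finset V, m ≤ #s → ∃ t ⊆ s, G.IsNClique 6 t)
    {J : Finset ι} {X : Finset V} {Y : ι → Finset V} {w : ι → ℕ}
    (h : ∀ j ∈ J, LowerDense G m η (w j) X (Y j)) (hX : ((#J : ℝ) + 1) * m ≤ #X)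
    (hY : ∀ j ∈ J, m ≤ #(Y j)) :
    ∃ A ⊆ X, G.IsNClique 6 A ∧ ∀ j ∈ J, ∀ v ∈ A,
      (((w j : ℝ) - 1) / 6 + η) * #(Y j) ≤ #{y ∈ Y j | G.Adj v y} := by
  set bad : ι → Finset V := fun j =>
    {v ∈ X | (#{y ∈ Y j | G.Adj v y} : ℝ) < (((w j : ℝ) - 1) / 6 + η) * #(Y j)} with hbad
  have hb : ∀ j ∈ J, (#(bad j) : ℝ) ≤ m := by
    intro j hj
    by_contra! hlt
    have h1 := h j hj (bad j) (filter_subset _ _) (Y j) subset_rfl hlt.le (hY j hj)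
    rw [card_interedges_eq_sum] at h1
    push_cast at h1
    have hne : (bad j).Nonempty := card_pos.1 (by exact_mod_cast hm.trans hlt)
    have h2 : ∑ v ∈ bad j, (#{y ∈ Y j | G.Adj v y} : ℝ) <
        ∑ v ∈ bad j, (((w j : ℝ) - 1) / 6 + η) * #(Y j) :=
      sum_lt_sum_of_nonempty hne fun v hv => (mem_filter.1 hv).2
    rw [sum_const, nsmul_eq_mul] at h2
    linarith
  have hbU : (#(J.biUnion bad) : ℝ) ≤ #J * m := by
    refine (Nat.cast_le.2 card_biUnion_le).trans ?_
    push_cast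
    exact (sum_le_sum hb).trans (by simp)
  have hgood : m ≤ #(X \ J.biUnion bad) := by
    have : (#X : ℝ) ≤ #(X \ J.biUnion bad) + #(J.biUnion bad) := by
      exact_mod_cast card_le_card_sdiff_add_card
    linarith
  obtain ⟨A, hA, hc⟩ := hα _ hgood
  refine ⟨A, hA.trans sdiff_subset, hc, fun j hj v hv => ?_⟩
  have hv' := mem_sdiff.1 (hA hv)
  by_contra! hlt
  exact hv'.2 (mem_biUnion.2 ⟨j, hj, mem_filter.2 ⟨hv'.1, hlt⟩⟩)

/-- Double counting: a positive proportion `η` of `Y` is adjacent to at least `w` of the six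
vertices of `A`. Pigeonhole over the `2 ^ 6 = 64` subsets of `A` makes those neighbours common. -/
theorem exists_common_nbhd {G : SimpleGraph V} {η : ℝ} {A Y : Finset V} {w : ℕ}
    (hA : #A = 6) (hw : 1 ≤ w) (hw6 : w ≤ 6)
    (h : ∀ v ∈ A, (((w : ℝ) - 1) / 6 + η) * #Y ≤ #{y ∈ Y | G.Adj v y}) :
    ∃ S ⊆ A, w ≤ #S ∧ η / 64 * #Y ≤ #{y ∈ Y | ∀ v ∈ S, G.Adj v y} := by
  set f : V → Finset V := fun y => {v ∈ A | G.Adj v y} with hf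
  have hdc : ∑ v ∈ A, #{y ∈ Y | G.Adj v y} = ∑ y ∈ Y, #(f y) :=
    sum_card_bipartiteAbove_eq_sum_card_bipartiteBelow _
  set Z : Finset V := {y ∈ Y | w ≤ #(f y)} with hZ
  have h1 : ((w : ℝ) - 1 + 6 * η) * #Y ≤ ∑ y ∈ Y, (#(f y) : ℝ) := by
    have := sum_le_sum h
    rw [sum_const, hA] at this
    have e : ∑ v ∈ A, (#{y ∈ Y | G.Adj v y} : ℝ) = ∑ y ∈ Y, (#(f y) : ℝ) := by exact_mod_cast hdc
    rw [e] at this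
    simp only [nsmul_eq_mul] at this
    push_cast at this
    linarith
  have h2 : ∑ y ∈ Y, (#(f y) : ℝ) ≤ ((w : ℝ) - 1) * #Y + 6 * #Z := by
    have : ∀ y ∈ Y, (#(f y) : ℝ) ≤ ((w : ℝ) - 1) + if w ≤ #(f y) then 6 else 0 := by
      intro y _
      have h6 : (#(f y) : ℝ) ≤ 6 := by
        exact_mod_cast (card_le_card (filter_subset _ A)).trans hA.le
      have hw' : (1 : ℝ) ≤ w := by exact_mod_cast hw
      split_ifs with hc
      · linarith
      · have : (#(f y) : ℝ) + 1 ≤ w := by exact_mod_cast not_le.1 hc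
        linarith
    refine (sum_le_sum this).trans (le_of_eq ?_)
    rw [sum_add_distrib, ← sum_filter, sum_const, sum_const]
    simp only [nsmul_eq_mul]
    ring
  have h3 : η * #Y ≤ #Z := by linarith
  obtain ⟨S, hS, hle⟩ := exists_le_card_fiber_of_nsmul_le_card_of_maps_to
    (s := Z) (t := A.powerset.filter (fun S => w ≤ #S)) (f := f) (b := (#Z : ℝ) / 64)
    (fun y hy => mem_filter.2 ⟨mem_powerset.2 (filter_subset _ _), (mem_filter.1 hy).2⟩)
    ⟨A, mem_filter.2 ⟨mem_powerset.2 subset_rfl, by omega⟩⟩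
    (by
      have : #(A.powerset.filter (fun S => w ≤ #S)) ≤ 64 :=
        (card_le_card (filter_subset _ _)).trans (by rw [card_powerset, hA]; norm_num)
      have : (#(A.powerset.filter (fun S => w ≤ #S)) : ℝ) ≤ 64 := by exact_mod_cast this
      have h0 : (0 : ℝ) ≤ #Z := Nat.cast_nonneg _
      rw [nsmul_eq_mul]
      nlinarith)
  rw [mem_filter, mem_powerset] at hS
  refine ⟨S, hS.1, hS.2, ?_⟩
  have : #{y ∈ Z | f y = S} ≤ #{y ∈ Y | ∀ v ∈ S, G.Adj v y} := by
    refine card_le_card fun y hy => ?_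
    simp only [hZ, mem_filter] at hy ⊢
    refine ⟨hy.1.1, fun v hv => ?_⟩
    rw [← hy.2] at hv
    exact (mem_filter.1 hv).2
  have : (#{y ∈ Z | f y = S} : ℝ) ≤ #{y ∈ Y | ∀ v ∈ S, G.Adj v y} := by exact_mod_cast this
  linarith

/-- Embedding property of the cluster set `J`: whenever sets `Y j` are pairwise lower dense with
weights `w` and large enough, their union contains a `t`-clique. The size requirement leaves room
for one loss of a factor `η / 64` per cluster embedded before. -/
def Emb (G : SimpleGraph V) (m η : ℝ) (w : ι → ι → ℕ) (J : Finset ι) (t : ℕ) : Prop :=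
  ∀ Y : ι → Finset V, (∀ i ∈ J, ∀ j ∈ J, i ≠ j → LowerDense G m η (w i j) (Y i) (Y j)) →
    (∀ i ∈ J, (64 / η) ^ #J * m ≤ #(Y i)) → ∃ C ⊆ J.biUnion Y, G.IsNClique t C

variable {G : SimpleGraph V} {m η : ℝ} {w : ι → ι → ℕ}

theorem emb_singleton (hm : 0 < m) (hη : 0 < η) (hη1 : η ≤ 1)
    (hα : ∀ s : Finset V, m ≤ #s → ∃ t ⊆ s, G.IsNClique 6 t) (j : ι) :
    Emb G m η w {j} 6 := by
  intro Y _ h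
  have h1 := h j (by simp)
  rw [card_singleton, pow_one] at h1
  have h2 : 1 ≤ 64 / η := by rw [le_div_iff₀ hη]; linarith
  obtain ⟨C, hC, hc⟩ := hα (Y j) (by nlinarith)
  exact ⟨C, by simpa using hC, hc⟩

/-- One embedding step. In a typical 6-clique of the new cluster `l`, one can take
either a single vertex (`a = 1`), or any number `a` of vertices left after discarding, for each
`j ∈ J`, the `6 - w l j` vertices outside the common-neighbour set for `Y j`. The sets `Y j` then
shrink to the common neighbourhoods of the chosen vertices. -/
theorem Emb.insert (hm : 0 < m) (hη : 0 < η) (hη1 : η ≤ 1)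
    (hα : ∀ s : Finset V, m ≤ #s → ∃ t ⊆ s, G.IsNClique 6 t)
    (h6 : ∀ i j, w i j ≤ 6) {J : Finset ι} {l : ι} (hl : l ∉ J) (hw1 : ∀ j ∈ J, 1 ≤ w l j) {t a : ℕ}
    (ha : a = 1 ∨ a + ∑ j ∈ J, (6 - w l j) ≤ 6) (hJ : Emb G m η w J t) :
    Emb G m η w (insert l J) (t + a) := by
  intro Y hY hc
  have hB : 2 ≤ 64 / η := by rw [le_div_iff₀ hη]; linarith
  rw [card_insert_of_notMem hl] at hc
  have hBn : ((#J : ℝ) + 1) ≤ (64 / η) ^ (#J + 1) := by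
    have h1 : ((#J + 1 : ℕ) : ℝ) ≤ 2 ^ (#J + 1) := by exact_mod_cast Nat.lt_two_pow_self.le
    push_cast at h1
    exact h1.trans (pow_le_pow_left₀ (by norm_num) hB _)
  have hB1 : (1 : ℝ) ≤ (64 / η) ^ (#J + 1) := one_le_pow₀ (by linarith)
  obtain ⟨A, hAX, hA, htyp⟩ := exists_typical_clique hm hα (J := J) (X := Y l) (Y := Y) (w := w l)
    (η := η)
    (fun j hj => hY l (by simp) j (by simp [hj]) (fun h => hl (h ▸ hj)))
    ((mul_le_mul_of_nonneg_right hBn hm.le).trans (hc l (by simp)))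
    (fun j hj => le_trans (by nlinarith) (hc j (by simp [hj])))
  have hA' : ∃ A' ⊆ A, #A' = a ∧ ∀ j ∈ J,
      η / 64 * #(Y j) ≤ #{y ∈ Y j | ∀ v ∈ A', G.Adj v y} := by
    rcases ha with rfl | ha
    · obtain ⟨v, hv⟩ : A.Nonempty := card_pos.1 (by rw [hA.card_eq]; norm_num)
      refine ⟨{v}, by simpa using hv, by simp, fun j hj => ?_⟩
      have h1 := htyp j hj v hv
      have h2 : (1 : ℝ) ≤ w l j := by exact_mod_cast hw1 j hj
      have h3 : (0 : ℝ) ≤ #(Y j) := Nat.cast_nonneg _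
      simp only [mem_singleton, forall_eq]
      refine le_trans (mul_le_mul_of_nonneg_right ?_ h3) h1
      linarith
    · have := fun j (hj : j ∈ J) => exists_common_nbhd hA.card_eq (hw1 j hj) (h6 l j) (htyp j hj)
      choose! S hSA hSw hS using this
      have hle : a ≤ #{v ∈ A | ∀ j ∈ J, v ∈ S j} := by
        have h1 : A \ {v ∈ A | ∀ j ∈ J, v ∈ S j} ⊆ J.biUnion fun j => A \ S j := by
          intro v hv
          simp only [mem_sdiff, mem_filter, mem_biUnion, not_and, not_forall] at hv ⊢
          obtain ⟨hvA, hv⟩ := hv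
          obtain ⟨j, hj, hjv⟩ := hv hvA
          exact ⟨j, hj, hvA, hjv⟩
        have h2 : #(J.biUnion fun j => A \ S j) ≤ ∑ j ∈ J, (6 - w l j) := by
          refine card_biUnion_le.trans (sum_le_sum fun j hj => ?_)
          rw [card_sdiff_of_subset (hSA j hj), hA.card_eq]
          exact Nat.sub_le_sub_left (hSw j hj) 6
        have h3 := card_le_card h1
        rw [card_sdiff_of_subset (filter_subset _ _), hA.card_eq] at h3
        omega
      obtain ⟨A', hA', hcard⟩ := exists_subset_card_eq hle
      refine ⟨A', hA'.trans (filter_subset _ _), hcard, fun j hj => (hS j hj).trans ?_⟩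
      refine Nat.cast_le.2 (card_le_card ?_)
      refine monotone_filter_right _ fun y _ hy v hv => hy v ?_
      exact (mem_filter.1 (hA' hv)).2 j hj
  obtain ⟨A', hA'A, hcard, hbig⟩ := hA'
  obtain ⟨C, hCs, hC⟩ := hJ (fun j => {y ∈ Y j | ∀ v ∈ A', G.Adj v y})
    (fun i hi j hj hij => (hY i (by simp [hi]) j (by simp [hj]) hij).mono (filter_subset _ _)
      (filter_subset _ _))
    (fun j hj => by
      refine le_trans ?_ (hbig j hj)
      have := mul_le_mul_of_nonneg_left (hc j (by simp [hj])) (show 0 ≤ η / 64 by positivity)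
      refine le_trans (le_of_eq ?_) this
      rw [pow_succ]; field_simp)
  have hadj : ∀ v ∈ A', ∀ y ∈ C, G.Adj v y := by
    intro v hv y hy
    obtain ⟨j, hj, hyj⟩ := mem_biUnion.1 (hCs hy)
    exact (mem_filter.1 hyj).2 v hv
  refine ⟨A' ∪ C, ?_, ?_, ?_⟩
  · rw [biUnion_insert]
    refine union_subset_union (hA'A.trans hAX) (hCs.trans ?_)
    exact biUnion_mono fun j _ => filter_subset _ _
  · intro u hu v hv huv
    simp only [coe_union, Set.mem_union, mem_coe] at hu hv
    rcases hu with hu | hu <;> rcases hv with hv | hv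
    · exact hA.isClique (hA'A hu) (hA'A hv) huv
    · exact hadj u hu v hv
    · exact (hadj v hv u hu).symm
    · exact hC.isClique hu hv huv
  · rw [card_union_of_disjoint, hcard, hC.card_eq, add_comm]
    exact disjoint_left.2 fun v hv hv' => (hadj v hv v hv').ne rfl

/-- Each additional cluster contributes one more vertex. -/
theorem Emb.superset (hm : 0 < m) (hη : 0 < η) (hη1 : η ≤ 1)
    (hα : ∀ s : Finset V, m ≤ #s → ∃ t ⊆ s, G.IsNClique 6 t)
    (h6 : ∀ i j, w i j ≤ 6) {I J : Finset ι} (hw : ∀ i ∈ J, ∀ j ∈ J, i ≠ j → 1 ≤ w i j) {t : ℕ}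
    (hIJ : I ⊆ J) (hI : Emb G m η w I t) : Emb G m η w J (t + (#J - #I)) := by
  obtain ⟨k, hk⟩ : ∃ k, #J = #I + k := ⟨#J - #I, by have := card_le_card hIJ; omega⟩
  induction k generalizing J with
  | zero =>
    obtain rfl := eq_of_subset_of_card_le hIJ (by omega)
    simpa using hI
  | succ k ih =>
    obtain ⟨l, hlJ, hlI⟩ := exists_mem_notMem_of_card_lt_card (s := I) (t := J) (by omega)
    have h1 := ih (J := J.erase l)
      (fun i hi j hj => hw i (mem_of_mem_erase hi) j (mem_of_mem_erase hj))
      (subset_erase.2 ⟨hIJ, hlI⟩) (by rw [card_erase_of_mem hlJ]; omega)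
    have h2 := h1.insert hm hη hη1 hα h6 (l := l) (a := 1) (by simp)
      (fun j hj => hw l hlJ j (mem_of_mem_erase hj) (ne_of_mem_erase hj).symm) (Or.inl rfl)
    rw [insert_erase hlJ, card_erase_of_mem hlJ] at h2
    convert h2 using 1
    omega

/-- Six vertices from `j`, `w i j` from `i`, and a single vertex from every other cluster. -/
theorem emb_pair (hm : 0 < m) (hη : 0 < η) (hη1 : η ≤ 1)
    (hα : ∀ s : Finset V, m ≤ #s → ∃ t ⊆ s, G.IsNClique 6 t) (h6 : ∀ i j, w i j ≤ 6)
    {J : Finset ι} (hw : ∀ i ∈ J, ∀ j ∈ J, i ≠ j → 1 ≤ w i j) {i j : ι} (hi : i ∈ J) (hj : j ∈ J)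
    (hij : i ≠ j) : Emb G m η w J (6 + w i j + (#J - 2)) := by
  have h1 := (emb_singleton (w := w) hm hη hη1 hα j).insert hm hη hη1 hα h6 (l := i) (a := w i j)
    (by simpa using hij) (by simpa using hw i hi j hj hij) (Or.inr (by have := h6 i j; simp; omega))
  have h2 := h1.superset hm hη hη1 hα h6 hw (by intro k; simp; rintro (rfl | rfl) <;> assumption)
  rwa [card_pair hij] at h2

/-- Six vertices from `k`, `w j k` from `j`, `w i j + w i k - 6` from `i`, and a single vertex
from every other cluster. -/
theorem emb_triple (hm : 0 < m) (hη : 0 < η) (hη1 : η ≤ 1)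
    (hα : ∀ s : Finset V, m ≤ #s → ∃ t ⊆ s, G.IsNClique 6 t) (h6 : ∀ i j, w i j ≤ 6)
    {J : Finset ι} (hw : ∀ i ∈ J, ∀ j ∈ J, i ≠ j → 1 ≤ w i j) {i j k : ι}
    (hi : i ∈ J) (hj : j ∈ J) (hk : k ∈ J)
    (hij : i ≠ j) (hik : i ≠ k) (hjk : j ≠ k) (hs : 6 ≤ w i j + w i k) :
    Emb G m η w J (w i j + w i k + w j k + (#J - 3)) := by
  have h1 := (emb_singleton (w := w) hm hη hη1 hα k).insert hm hη hη1 hα h6 (l := j) (a := w j k)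
    (by simpa using hjk) (by simpa using hw j hj k hk hjk) (Or.inr (by have := h6 j k; simp; omega))
  have h2 := h1.insert hm hη hη1 hα h6 (l := i) (a := w i j + w i k - 6) (by simp [hij, hik])
    (by simp; exact ⟨hw i hi j hj hij, hw i hi k hk hik⟩)
    (Or.inr (by have := h6 i j; have := h6 i k; rw [sum_pair hjk]; omega))
  have h3 := h2.superset hm hη hη1 hα h6 hw
    (by intro k; simp; rintro (rfl | rfl | rfl) <;> assumption)
  rw [card_eq_three.2 ⟨i, j, k, hij, hik, hjk, rfl⟩] at h3
  convert h3 using 1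
  omega
end

/-! ### From the regularity partition to the edge bound -/

section assembly
variable {V : Type}

theorem exists_clique_of_alphaP_lt [Fintype V] {G : SimpleGraph V} {p : ℕ} {s : Finset V}
    (h : alphaP p G < #s) : ∃ t ⊆ s, G.IsNClique p t := by
  by_contra! hc
  have hb : BddAbove {k : ℕ | ∃ s : Finset V, s.card = k ∧ ∀ t : Finset V, t ⊆ s →
      ¬ G.IsNClique p t} := by
    refine ⟨Fintype.card V, ?_⟩
    rintro k ⟨s, rfl, -⟩
    exact card_le_univ s
  exact absurd (le_csSup hb ⟨s, rfl, hc⟩) (not_le.2 h)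

theorem two_mul_edgeCount [Fintype V] (G : SimpleGraph V) :
    2 * edgeCount G = #(G.interedges univ univ) := by
  have h : edgeCount G = #G.edgeFinset := by
    rw [edgeCount, ← SimpleGraph.coe_edgeFinset, Set.ncard_coe_finset]
  rw [h, ← G.sum_degrees_eq_twice_card_edges, card_interedges_eq_sum]
  refine sum_congr rfl fun v _ => ?_
  rw [← SimpleGraph.card_neighborFinset_eq_degree]
  congr 1
  ext y
  simp

/-- Weight of a pair of clusters: `6` times its density, lowered by `2 * η` and rounded up.
Irregular and diagonal pairs get weight `0`. The natural-number ceiling sends negative values to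
`0`. -/
noncomputable def weight (G : SimpleGraph V) (ε η : ℝ) (X Y : Finset V) : ℕ :=
  if X ≠ Y ∧ G.IsUniform ε X Y then ⌈6 * ((G.edgeDensity X Y : ℝ) - 2 * η)⌉₊ else 0

theorem weight_comm (G : SimpleGraph V) (ε η : ℝ) (X Y : Finset V) :
    weight G ε η X Y = weight G ε η Y X := by
  unfold weight
  simp only [G.edgeDensity_comm X Y, ne_comm (a := X), G.isUniform_comm (s := X)]

theorem weight_self (G : SimpleGraph V) (ε η : ℝ) (X : Finset V) : weight G ε η X X = 0 := by
  simp [weight]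

theorem weight_le_six (G : SimpleGraph V) {ε η : ℝ} (hη : 0 < η) (X Y : Finset V) :
    weight G ε η X Y ≤ 6 := by
  unfold weight
  split_ifs
  · refine Nat.ceil_le.2 ?_
    have : (G.edgeDensity X Y : ℝ) ≤ 1 := by exact_mod_cast G.edgeDensity_le_one X Y
    push_cast
    linarith
  · simp

/-- Regularity with `ε ≤ η` keeps densities of large subsets within `η`, and rounding up
loses less than `1 / 6`, so a pair of positive weight `w` is lower dense with that `w`. -/
theorem lowerDense_of_weight {G : SimpleGraph V} {ε η m : ℝ} (hm : 0 < m) (hεη : ε ≤ η)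
    {X Y : Finset V} (h : 1 ≤ weight G ε η X Y) (hX : #X * ε ≤ m) (hY : #Y * ε ≤ m) :
    LowerDense G m η (weight G ε η X Y) X Y := by
  intro U hU U' hU' hmU hmU'
  unfold weight at h ⊢
  split_ifs at h ⊢ with hc
  · have h1 := (abs_lt.1 (hc.2 hU hU' (hX.trans hmU) (hY.trans hmU'))).1
    have h2 : (⌈6 * ((G.edgeDensity X Y : ℝ) - 2 * η)⌉₊ : ℝ) <
        6 * ((G.edgeDensity X Y : ℝ) - 2 * η) + 1 :=
      Nat.ceil_lt_add_one (Nat.ceil_pos.1 h).le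
    have h3 : (G.edgeDensity U U' : ℝ) = #(G.interedges U U') / (#U * #U') := by
      rw [SimpleGraph.edgeDensity_def]; push_cast; rfl
    have h4 : (0 : ℝ) < #U * #U' := mul_pos (hm.trans_le hmU) (hm.trans_le hmU')
    rw [← le_div_iff₀ h4, ← h3]
    linarith
  · omega

/-- In a `K₁₄`-free graph the cluster weights satisfy the constraints of `quad_le`, because
larger weights would let `emb_pair` or `emb_triple` produce a 14-clique. -/
theorem quad_parts_le {G : SimpleGraph V} (hG : G.CliqueFree 14) {ε η m : ℝ} (hm : 0 < m)
    (hη : 0 < η) (hη1 : η ≤ 1) (hεη : ε ≤ η)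
    (hα : ∀ s : Finset V, m ≤ #s → ∃ t ⊆ s, G.IsNClique 6 t)
    (s : Finset (Finset V)) (hs : ∀ X ∈ s, #X * ε ≤ m) (hs' : ∀ X ∈ s, (64 / η) ^ 6 * m ≤ #X) :
    quad (weight G ε η) (fun X => (#X : ℝ)) s ≤ 72 / 23 * (∑ X ∈ s, (#X : ℝ)) ^ 2 := by
  have hB : 1 ≤ 64 / η := by rw [le_div_iff₀ hη]; linarith
  have key : ∀ J ⊆ s, (∀ i ∈ J, ∀ j ∈ J, i ≠ j → 1 ≤ weight G ε η i j) → #J ≤ 6 →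
      ∀ t, Emb G m η (weight G ε η) J t → t < 14 := by
    intro J hJ hw hc t ht
    by_contra! h14
    obtain ⟨C, -, hC⟩ := ht id
      (fun i hi j hj hij => lowerDense_of_weight hm hεη (hw i hi j hj hij) (hs i (hJ hi))
        (hs j (hJ hj)))
      (fun i hi => le_trans (mul_le_mul_of_nonneg_right (pow_le_pow_right₀ hB hc) hm.le)
        (hs' i (hJ hi)))
    exact (hG.mono h14) C hC
  have h6 := weight_le_six G (ε := ε) hη
  refine quad_le (weight_comm G ε η) (weight_self G ε η) h6 s _ (fun X => Nat.cast_nonneg _) ?_ ?_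
  · intro J hJ hw hc i hi j hj hij
    have := key J hJ hw hc _ (emb_pair hm hη hη1 hα h6 hw hi hj hij)
    have : 1 < #J := one_lt_card.2 ⟨i, hi, j, hj, hij⟩
    omega
  · intro J hJ hw hc i hi j hj k hk hij hik hjk
    by_contra! hlt
    have h1 := h6 i j
    have h2 := h6 i k
    have h3 := h6 j k
    have := key J hJ hw (by omega) _
      (emb_triple hm hη hη1 hα h6 hw hi hj hk hij hik hjk (by omega))
    have : 2 < #J := two_lt_card.2 ⟨i, hi, j, hj, k, hk, hij, hik, hjk⟩
    omega

/-- Edge count over the parts: a regular pair contributes at most a sixth of its weight plus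
`2 * η`; the diagonal costs `2 * ε` since there are at least `4 / ε` parts, and the irregular pairs
cost `4 * ε`. -/
theorem interedges_le [Fintype V] {G : SimpleGraph V} [Nonempty V] {ε η : ℝ} (hε : 0 < ε)
    {P : Finpartition (univ : Finset V)} (hP : P.IsEquipartition) (hU : P.IsUniform G ε)
    (hcard : 4 / ε ≤ #P.parts) (hη : 0 < η)
    (hQ : quad (weight G ε η) (fun X => (#X : ℝ)) P.parts ≤
      72 / 23 * (∑ X ∈ P.parts, (#X : ℝ)) ^ 2) :
    (#(G.interedges univ univ) : ℝ) ≤ (12 / 23 + 2 * η + 6 * ε) * (Fintype.card V : ℝ) ^ 2 := by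
  have hS : ∑ X ∈ P.parts, (#X : ℝ) = Fintype.card V := by
    exact_mod_cast P.sum_card_parts
  have hn : (0 : ℝ) < Fintype.card V := by exact_mod_cast Fintype.card_pos
  have h1 : #(G.interedges univ univ) =
      ∑ ab ∈ P.parts ×ˢ P.parts, #(G.interedges ab.1 ab.2) :=
    Rel.card_interedges_finpartition _ P P
  have h2 : ∀ ab ∈ P.parts ×ˢ P.parts, (#(G.interedges ab.1 ab.2) : ℝ) ≤
      1 / 6 * (weight G ε η ab.1 ab.2 * (#ab.1 * #ab.2)) + 2 * η * (#ab.1 * #ab.2)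
        + (if ab.1 = ab.2 then (#ab.1 * #ab.2 : ℝ) else 0)
        + (if ab ∈ P.nonUniforms G ε then (#ab.1 * #ab.2 : ℝ) else 0) := by
    rintro ⟨X, Y⟩ hXY
    obtain ⟨hX, hY⟩ := mem_product.1 hXY
    dsimp only at hX hY ⊢
    have hp : (0 : ℝ) ≤ #X * #Y := by positivity
    have hw : (0 : ℝ) ≤ weight G ε η X Y * (#X * #Y) := by positivity
    have hle : (#(G.interedges X Y) : ℝ) ≤ #X * #Y := by exact_mod_cast G.card_interedges_le_mul X Y
    have hηp : 0 ≤ 2 * η * (#X * #Y : ℝ) := by positivity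
    by_cases he : X = Y
    · rw [if_pos he]
      have : (0 : ℝ) ≤ if (X, Y) ∈ P.nonUniforms G ε then (#X * #Y : ℝ) else 0 := by
        split_ifs <;> positivity
      linarith
    · by_cases hu : G.IsUniform ε X Y
      · have hnot : (X, Y) ∉ P.nonUniforms G ε := by simp [hu]
        rw [if_neg he, if_neg hnot]
        have hwt : 6 * ((G.edgeDensity X Y : ℝ) - 2 * η) ≤ weight G ε η X Y := by
          rw [weight, if_pos ⟨he, hu⟩]
          exact Nat.le_ceil _
        have hd : (G.edgeDensity X Y : ℝ) * (#X * #Y) = #(G.interedges X Y) := by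
          rw [SimpleGraph.edgeDensity_def]
          push_cast
          refine div_mul_cancel₀ _ ?_
          have hx := (P.nonempty_of_mem_parts hX).card_pos
          have hy := (P.nonempty_of_mem_parts hY).card_pos
          positivity
        rw [← hd]
        nlinarith
      · have hin : (X, Y) ∈ P.nonUniforms G ε := by simp [hX, hY, he, hu]
        rw [if_neg he, if_pos hin]
        linarith
  have h3 : ∑ ab ∈ P.parts ×ˢ P.parts, (weight G ε η ab.1 ab.2 * (#ab.1 * #ab.2) : ℝ) =
      quad (weight G ε η) (fun X => (#X : ℝ)) P.parts := by
    rw [quad, sum_product]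
  have h4 : ∑ ab ∈ P.parts ×ˢ P.parts, (#ab.1 * #ab.2 : ℝ) = (Fintype.card V : ℝ) ^ 2 := by
    rw [← hS, sq, sum_mul_sum, sum_product]
  have h5 : ∑ ab ∈ P.parts ×ˢ P.parts, (if ab.1 = ab.2 then (#ab.1 * #ab.2 : ℝ) else 0) ≤
      2 * ε * (Fintype.card V : ℝ) ^ 2 := by
    rw [sum_product]
    have e : ∀ X ∈ P.parts, ∑ Y ∈ P.parts, (if X = Y then (#X * #Y : ℝ) else 0) =
        (#X : ℝ) * #X := by
      intro X hX
      rw [sum_ite_eq, if_pos hX]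
    rw [sum_congr rfl e]
    have hk : (0 : ℝ) < #P.parts := lt_of_lt_of_le (by positivity) hcard
    have hkn : (#P.parts : ℝ) ≤ Fintype.card V := by exact_mod_cast P.card_parts_le_card
    have hb : ∀ X ∈ P.parts, (#X : ℝ) * #X ≤ #X * (2 * (Fintype.card V : ℝ) / #P.parts) := by
      intro X hX
      refine mul_le_mul_of_nonneg_left ?_ (Nat.cast_nonneg _)
      have h := hP.card_part_le_average_add_one hX
      have h' : (#X : ℝ) ≤ (Fintype.card V / #P.parts : ℕ) + 1 := by exact_mod_cast h
      have h'' : ((Fintype.card V / #P.parts : ℕ) : ℝ) ≤ (Fintype.card V : ℝ) / #P.parts :=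
        Nat.cast_div_le
      have : 1 ≤ (Fintype.card V : ℝ) / #P.parts := by rwa [le_div_iff₀ hk, one_mul]
      rw [two_mul, add_div]
      linarith
    refine (sum_le_sum hb).trans ?_
    rw [← sum_mul, hS, ← mul_div_assoc, div_le_iff₀ hk]
    rw [div_le_iff₀ hε] at hcard
    nlinarith [mul_pos hn hn]
  have h6 : ∑ ab ∈ P.parts ×ˢ P.parts,
      (if ab ∈ P.nonUniforms G ε then (#ab.1 * #ab.2 : ℝ) else 0) ≤
      4 * ε * (Fintype.card V : ℝ) ^ 2 := by
    rw [← sum_filter]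
    have hsub : {ab ∈ P.parts ×ˢ P.parts | ab ∈ P.nonUniforms G ε} ⊆ P.nonUniforms G ε :=
      fun ab h => (mem_filter.1 h).2
    refine (sum_le_sum_of_subset_of_nonneg hsub fun _ _ _ => by positivity).trans ?_
    refine (Finpartition.IsEquipartition.sum_nonUniforms_lt' univ_nonempty hε hP hU).le.trans ?_
    have hkn : (#P.parts : ℝ) ≤ Fintype.card V := by exact_mod_cast P.card_parts_le_card
    rw [card_univ]
    have : ((Fintype.card V : ℝ) + #P.parts) ^ 2 ≤ (2 * Fintype.card V) ^ 2 :=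
      pow_le_pow_left₀ (by positivity) (by linarith) 2
    nlinarith
  have h7 := sum_le_sum h2
  rw [sum_add_distrib, sum_add_distrib, sum_add_distrib, ← mul_sum, ← mul_sum, h3, h4] at h7
  rw [hS] at hQ
  rw [h1]
  push_cast
  linarith

/-- The theorem for an arbitrary finite vertex type. -/
theorem rt_bound_fintype (δ : ℝ) (hδ : 0 < δ) :
    ∃ (ε : ℝ) (n₀ : ℕ), 0 < ε ∧
      ∀ (V : Type) [Fintype V] (G : SimpleGraph V), n₀ ≤ Fintype.card V → G.CliqueFree 14 →
        (alphaP 6 G : ℝ) ≤ ε * (Fintype.card V : ℝ) →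
        (edgeCount G : ℝ) ≤ (12 / 23 + δ) * ((Fintype.card V).choose 2 : ℝ) := by
  set η : ℝ := min (δ / 8) 1 with hηdef
  have hη : 0 < η := lt_min (by positivity) one_pos
  have hη1 : η ≤ 1 := min_le_right _ _
  have hηδ : η ≤ δ / 8 := min_le_left _ _
  -- The embedding involves at most six clusters, each shrinking the others by `η / 64`.
  set B : ℝ := (64 / η) ^ 6 with hB
  have hBpos : 0 < B := by positivity
  set ε : ℝ := min (min η (δ / 24)) (1 / (2 * B)) with hεdef
  have hε : 0 < ε := lt_min (lt_min hη (by positivity)) (by positivity)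
  have hεη : ε ≤ η := (min_le_left _ _).trans (min_le_left _ _)
  have hεδ : ε ≤ δ / 24 := (min_le_left _ _).trans (min_le_right _ _)
  have hεB : B * ε ≤ 1 / 2 := by
    have : ε ≤ 1 / (2 * B) := min_le_right _ _
    rw [le_div_iff₀ (by positivity)] at this
    linarith
  set l : ℕ := ⌈4 / ε⌉₊ with hl
  have hlpos : 0 < l := Nat.ceil_pos.2 (by positivity)
  obtain ⟨M, hM⟩ : ∃ M, M = SzemerediRegularity.bound ε l := ⟨_, rfl⟩
  have hMpos : 0 < M := hM ▸ SzemerediRegularity.bound_pos _ _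
  -- With `ε / M`, the 6-independence number stays below the `m` chosen later. The last
  -- lower bound on `n` absorbs the difference between `n ^ 2 / 2` and `n.choose 2`.
  refine ⟨ε / M, max (max M l) ⌈4 * (12 / 23 + δ) / δ⌉₊, by positivity, ?_⟩
  intro V _ G hn hG hα
  obtain ⟨n, hcV⟩ : ∃ n, Fintype.card V = n := ⟨_, rfl⟩
  rw [hcV] at hn hα ⊢
  have hMn : M ≤ n := (le_max_left M l).trans ((le_max_left _ _).trans hn)
  have hln : l ≤ n := (le_max_right M l).trans ((le_max_left _ _).trans hn)
  have hδn : 4 * (12 / 23 + δ) / δ ≤ n := (Nat.le_ceil _).trans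
    (by exact_mod_cast (le_max_right _ _).trans hn)
  have hnpos : 0 < n := hlpos.trans_le hln
  have : Nonempty V := Fintype.card_pos_iff.1 (hcV ▸ hnpos)
  obtain ⟨P, hP, hlP, hPM, hU⟩ := szemeredi_regularity G hε (l := l) (hcV ▸ hln)
  rw [← hM] at hPM
  set k := #P.parts with hk
  have hkpos : 0 < k := hlpos.trans_le hlP
  set L : ℕ := n / k with hL
  have hLpos : 1 ≤ L := (Nat.one_le_div_iff hkpos).2 (hPM.trans hMn)
  -- Part sizes are `L` or `L + 1`, so `m` is at least `ε` times every part size.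
  set m : ℝ := ε * ((L : ℝ) + 1) with hmdef
  have hm : 0 < m := by positivity
  have hlarge : ∀ X ∈ P.parts, L ≤ #X := fun X hX => by
    simpa [card_univ, hcV] using hP.average_le_card_part hX
  have hsmall : ∀ X ∈ P.parts, #X ≤ L + 1 := fun X hX => by
    simpa [card_univ, hcV] using hP.card_part_le_average_add_one hX
  have hcl : ∀ s : Finset V, m ≤ #s → ∃ t ⊆ s, G.IsNClique 6 t := by
    intro s hs
    refine exists_clique_of_alphaP_lt ?_
    have h1 : n < (L + 1) * k := by
      have := Nat.lt_div_mul_add (a := n) hkpos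
      rw [← hL] at this
      linarith
    have h2 : (n : ℝ) < (L + 1) * M := by
      have : n < (L + 1) * M := h1.trans_le (Nat.mul_le_mul_left _ hPM)
      exact_mod_cast this
    have h3 : ε / M * n < m := by
      rw [div_mul_eq_mul_div, div_lt_iff₀ (by exact_mod_cast hMpos), hmdef, mul_assoc]
      exact mul_lt_mul_of_pos_left h2 hε
    exact_mod_cast (hα.trans_lt h3).trans_le hs
  have hL1 : (1 : ℝ) ≤ L := by exact_mod_cast hLpos
  have hQ := quad_parts_le hG hm hη hη1 hεη hcl P.parts
    (fun X hX => by
      have : (#X : ℝ) ≤ L + 1 := by exact_mod_cast hsmall X hX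
      rw [hmdef, mul_comm]
      exact mul_le_mul_of_nonneg_left this hε.le)
    (fun X hX => by
      have h1 : (L : ℝ) ≤ #X := by exact_mod_cast hlarge X hX
      rw [hmdef, ← mul_assoc]
      nlinarith)
  have hcard : 4 / ε ≤ #P.parts := (Nat.le_ceil _).trans (by exact_mod_cast hlP)
  have hE := interedges_le hε hP hU hcard hη hQ
  have h2e : (2 : ℝ) * edgeCount G = #(G.interedges univ univ) := by
    exact_mod_cast two_mul_edgeCount G
  rw [← h2e, hcV] at hE
  rw [Nat.cast_choose_two]
  rw [div_le_iff₀ hδ] at hδn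
  have hn0 : (0 : ℝ) < n := by exact_mod_cast hnpos
  have hsum : 2 * η + 6 * ε ≤ δ / 2 := by linarith
  have e1 := mul_le_mul_of_nonneg_right hsum (sq_nonneg (n : ℝ))
  have e2 := mul_le_mul_of_nonneg_right hδn hn0.le
  linarith

end assembly

/-- Ramsey–Turán upper bound: ρ₆(14) ≤ 12/23. -/
theorem rt_bound_13 (δ : ℝ) (hδ : 0 < δ) :
    ∃ (ε : ℝ) (n₀ : ℕ), 0 < ε ∧
      ∀ (n : ℕ) (G : SimpleGraph (Fin n)), n₀ ≤ n → G.CliqueFree 14 →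
        (alphaP 6 G : ℝ) ≤ ε * (n : ℝ) →
        (edgeCount G : ℝ) ≤ (12 / 23 + δ) * (n.choose 2 : ℝ) := by
  obtain ⟨ε, n₀, hε, h⟩ := rt_bound_fintype δ hδ
  refine ⟨ε, n₀, hε, fun n G hn hG hα => ?_⟩
  have := h (Fin n) G
  rw [Fintype.card_fin] at this
  exact this hn hG hα
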